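/- The double integral ∫_{ℝ^d} ∫_{ℝ^d} f(x) f(y) 𝒞(x − y) dx dy is bounded below by (𝒞̄/2) · ∫_{ℝ^d} f(x)² dx, and in particular is strictly positive. -/

import Mathlib

open MeasureTheory Real

/-!
Since `|‖x‖ - ‖x - z‖| ≤ ‖z‖`, the weight `f x = exp (-b * ‖x‖)` satisfies
`|f (x - z) - f x| ≤ (exp (b * R) - 1) * f x` whenever `‖z‖ ≤ R`: on the support of `𝒞` its relative
oscillation is uniformly small. Hence `𝒞 ⋆ f` is `𝒞̄ f` up to a relative error, and pairing with `f`
gives `|∬ f(x) f(y) 𝒞(x - y) - 𝒞̄ ∫ f²| ≤ (exp (b * R) - 1) ‖𝒞‖₁ ∫ f²`. The bound on `b` forces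
`b * R ≤ 1`, so `exp (b * R) - 1 ≤ b * R * exp 1`, and the right-hand side is at most half of
`𝒞̄ ∫ f²`.
-/

open ContinuousLinearMap (lsmul)
open scoped Convolution

section Convolution

variable {G : Type*} [AddCommGroup G] [MeasurableSpace G] [MeasurableAdd₂ G] [MeasurableNeg G]
  {μ : Measure G} [μ.IsAddLeftInvariant]

lemma integral_integral_mul_mul_sub_eq [μ.IsNegInvariant] (K f : G → ℝ) :
    ∫ x, ∫ y, f x * f y * K (x - y) ∂μ ∂μ = ∫ x, f x * (K ⋆[lsmul ℝ ℝ, μ] f) x ∂μ := by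
  simp only [convolution_lsmul_swap, smul_eq_mul, ← integral_const_mul, mul_assoc, mul_comm (K _)]

variable [SFinite μ]

lemma norm_convolution_sub_integral_smul_le {F : Type*} [NormedAddCommGroup F] [NormedSpace ℝ F]
    [CompleteSpace F] {K : G → ℝ} {f : G → F} {x : G} {δ : ℝ}
    (hK : Integrable K μ) (hf : AEStronglyMeasurable f μ)
    (hosc : ∀ z ∈ Function.support K, ‖f (x - z) - f x‖ ≤ δ) :
    ‖(K ⋆[lsmul ℝ ℝ, μ] f) x - (∫ z, K z ∂μ) • f x‖ ≤ δ * ∫ z, |K z| ∂μ := by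
  have hbound : ∀ z, ‖K z • f (x - z) - K z • f x‖ ≤ δ * |K z| := by
    intro z
    rw [← smul_sub, norm_smul, Real.norm_eq_abs, mul_comm]
    by_cases hz : K z = 0
    · simp [hz]
    · gcongr
      exact hosc z hz
  have hconst : Integrable (fun z => K z • f x) μ := hK.smul_const _
  have hdiff : Integrable (fun z => K z • f (x - z) - K z • f x) μ :=
    (hK.abs.const_mul δ).mono'
      ((hK.aestronglyMeasurable.convolution_integrand_snd (lsmul ℝ ℝ) hf x).sub
        hconst.aestronglyMeasurable) (.of_forall hbound)
  have hconv : Integrable (fun z => K z • f (x - z)) μ := by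
    simpa [Pi.add_def] using hdiff.add hconst
  rw [convolution_lsmul, ← integral_smul_const, ← integral_sub hconv hconst, ← integral_const_mul]
  exact norm_integral_le_of_norm_le (hK.abs.const_mul δ) (.of_forall hbound)

lemma abs_integral_mul_convolution_sub_le {K f : G → ℝ} {ε : ℝ}
    (hK : Integrable K μ) (hf : MemLp f 2 μ)
    (hosc : ∀ x, ∀ z ∈ Function.support K, |f (x - z) - f x| ≤ ε * |f x|) :
    |∫ x, f x * (K ⋆[lsmul ℝ ℝ, μ] f) x ∂μ - (∫ z, K z ∂μ) * ∫ x, f x ^ 2 ∂μ| ≤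
      ε * (∫ z, |K z| ∂μ) * ∫ x, f x ^ 2 ∂μ := by
  have hf2 : Integrable (fun x => f x ^ 2) μ := hf.integrable_sq
  have hmain : Integrable (fun x => (∫ z, K z ∂μ) * f x ^ 2) μ := hf2.const_mul _
  have hbound : ∀ x, ‖f x * (K ⋆[lsmul ℝ ℝ, μ] f) x - (∫ z, K z ∂μ) * f x ^ 2‖ ≤
      ε * (∫ z, |K z| ∂μ) * f x ^ 2 := fun x => calc
    _ = |f x| * ‖(K ⋆[lsmul ℝ ℝ, μ] f) x - (∫ z, K z ∂μ) • f x‖ := by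
      rw [← Real.norm_eq_abs, ← norm_mul, smul_eq_mul]
      congr 1
      ring
    _ ≤ |f x| * (ε * |f x| * ∫ z, |K z| ∂μ) := by
      gcongr
      exact norm_convolution_sub_integral_smul_le hK hf.1 (hosc x)
    _ = ε * (∫ z, |K z| ∂μ) * f x ^ 2 := by
      rw [← sq_abs (f x)]
      ring
  have hmeas : AEStronglyMeasurable (K ⋆[lsmul ℝ ℝ, μ] f) μ :=
    (hK.aestronglyMeasurable.convolution_integrand (lsmul ℝ ℝ) hf.1).integral_prod_right'
  have hdiff : Integrable
      (fun x => f x * (K ⋆[lsmul ℝ ℝ, μ] f) x - (∫ z, K z ∂μ) * f x ^ 2) μ :=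
    (hf2.const_mul _).mono' ((hf.1.mul hmeas).sub hmain.aestronglyMeasurable) (.of_forall hbound)
  have hpair : Integrable (fun x => f x * (K ⋆[lsmul ℝ ℝ, μ] f) x) μ := by
    simpa [Pi.add_def] using hdiff.add hmain
  rw [← integral_const_mul, ← integral_const_mul, ← integral_sub hpair hmain]
  exact norm_integral_le_of_norm_le (hf2.const_mul _) (.of_forall hbound)

end Convolution

lemma abs_exp_sub_one_le_exp_abs_sub_one (t : ℝ) : |exp t - 1| ≤ exp |t| - 1 := by
  refine abs_le'.2 ⟨?_, ?_⟩
  · gcongr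
    exact le_abs_self t
  · linarith [add_one_le_exp t, add_one_le_exp |t|, neg_abs_le t]

lemma exp_sub_one_le_mul_exp (t : ℝ) : exp t - 1 ≤ t * exp t := calc
  exp t - 1 = (1 - exp (-t)) * exp t := by
    rw [sub_mul, ← exp_add, neg_add_cancel, exp_zero, one_mul]
  _ ≤ t * exp t := by
    gcongr
    linarith [one_sub_le_exp_neg t]

lemma exp_mul_sub_one_mul_le_half {b R A B : ℝ} (hb : 0 < b) (hR : 0 < R) (hB : 0 < B)
    (hBA : B ≤ A) (hbA : b ≤ B / (2 * exp 1 * R * A)) : (exp (b * R) - 1) * A ≤ B / 2 := by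
  have hA : 0 < A := hB.trans_le hBA
  have hbudget : b * R * exp 1 * A ≤ B / 2 := by
    rw [le_div_iff₀ (by positivity)] at hbA
    linarith
  have hbR : b * R ≤ 1 := by
    refine le_of_mul_le_mul_right ?_ hA
    calc b * R * A = b * R * 1 * A := by ring
      _ ≤ b * R * exp 1 * A := by
          gcongr
          exact one_le_exp zero_le_one
      _ ≤ 1 * A := by linarith
  calc (exp (b * R) - 1) * A ≤ b * R * exp (b * R) * A := by
        gcongr
        exact exp_sub_one_le_mul_exp _
    _ ≤ b * R * exp 1 * A := by gcongr
    _ ≤ B / 2 := hbudget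

section ExpNegNorm

lemma abs_exp_neg_mul_norm_sub_le {E : Type*} [SeminormedAddCommGroup E] {b : ℝ} (hb : 0 ≤ b)
    (x z : E) :
    |exp (-b * ‖x - z‖) - exp (-b * ‖x‖)| ≤ (exp (b * ‖z‖) - 1) * exp (-b * ‖x‖) := by
  have hexponent : |b * (‖x‖ - ‖x - z‖)| ≤ b * ‖z‖ := by
    rw [abs_mul, abs_of_nonneg hb]
    gcongr
    simpa using abs_norm_sub_norm_le x (x - z)
  calc |exp (-b * ‖x - z‖) - exp (-b * ‖x‖)|
      = |exp (b * (‖x‖ - ‖x - z‖)) - 1| * exp (-b * ‖x‖) := by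
        rw [← abs_of_pos (exp_pos (-b * ‖x‖)), ← abs_mul, sub_one_mul, abs_of_pos (exp_pos _),
          ← exp_add]
        ring_nf
    _ ≤ (exp |b * (‖x‖ - ‖x - z‖)| - 1) * exp (-b * ‖x‖) := by
        gcongr
        exact abs_exp_sub_one_le_exp_abs_sub_one _
    _ ≤ (exp (b * ‖z‖) - 1) * exp (-b * ‖x‖) := by gcongr

variable {E : Type*} [NormedAddCommGroup E] [NormedSpace ℝ E] [FiniteDimensional ℝ E]
  [MeasurableSpace E] [BorelSpace E] (μ : Measure E) [μ.IsAddHaarMeasure]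

lemma integrable_exp_neg_mul_norm {c : ℝ} (hc : 0 < c) :
    Integrable (fun x : E => exp (-c * ‖x‖)) μ := by
  cases subsingleton_or_nontrivial E
  · exact Continuous.integrable_of_hasCompactSupport (by fun_prop) (.of_compactSpace _)
  · refine (integrable_fun_norm_addHaar μ (f := fun r => exp (-c * r))).2 ?_
    have hs : (-1 : ℝ) < (Module.finrank ℝ E - 1 : ℕ) :=
      neg_one_lt_zero.trans_le (Nat.cast_nonneg _)
    simpa using integrableOn_rpow_mul_exp_neg_mul_rpow hs one_pos hc

lemma memLp_two_exp_neg_mul_norm {b : ℝ} (hb : 0 < b) :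
    MemLp (fun x : E => exp (-b * ‖x‖)) 2 μ := by
  refine (memLp_two_iff_integrable_sq (by fun_prop)).2 ?_
  convert integrable_exp_neg_mul_norm μ (mul_pos two_pos hb) using 2 with x
  rw [← exp_nat_mul]
  push_cast
  ring_nf

lemma abs_integral_integral_exp_neg_mul_norm_sub_le {K : E → ℝ} {R b : ℝ} (hK : Integrable K μ)
    (hKR : Function.support K ⊆ {x | ‖x‖ ≤ R}) (hb : 0 < b) :
    |∫ x, ∫ y, exp (-b * ‖x‖) * exp (-b * ‖y‖) * K (x - y) ∂μ ∂μ -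
        (∫ z, K z ∂μ) * ∫ x, exp (-b * ‖x‖) ^ 2 ∂μ| ≤
      (exp (b * R) - 1) * (∫ z, |K z| ∂μ) * ∫ x, exp (-b * ‖x‖) ^ 2 ∂μ := by
  rw [integral_integral_mul_mul_sub_eq K (fun x => exp (-b * ‖x‖))]
  refine abs_integral_mul_convolution_sub_le hK (memLp_two_exp_neg_mul_norm μ hb) fun x z hz => ?_
  calc |exp (-b * ‖x - z‖) - exp (-b * ‖x‖)|
      ≤ (exp (b * ‖z‖) - 1) * exp (-b * ‖x‖) := abs_exp_neg_mul_norm_sub_le hb.le x z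
    _ ≤ (exp (b * R) - 1) * |exp (-b * ‖x‖)| := by
        rw [abs_exp]
        gcongr
        exact hKR hz

theorem double_integral_positive_general {K : E → ℝ} {R b : ℝ}
    (hKR : Function.support K ⊆ {x | ‖x‖ ≤ R}) (hKpos : 0 < ∫ x, K x ∂μ) (hb : 0 < b)
    (hbR : (exp (b * R) - 1) * ∫ x, |K x| ∂μ ≤ (∫ x, K x ∂μ) / 2)
    {f : E → ℝ} (hf : ∀ x, f x = exp (-b * ‖x‖)) :
    (∫ z, K z ∂μ) / 2 * (∫ x, f x ^ 2 ∂μ) ≤ ∫ x, ∫ y, f x * f y * K (x - y) ∂μ ∂μ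
    ∧ 0 < ∫ x, ∫ y, f x * f y * K (x - y) ∂μ ∂μ := by
  obtain rfl : f = fun x => exp (-b * ‖x‖) := funext hf
  have hK : Integrable K μ := .of_integral_ne_zero hKpos.ne'
  have hsq_pos : 0 < ∫ x, exp (-b * ‖x‖) ^ 2 ∂μ := by
    have hsq := (memLp_two_exp_neg_mul_norm μ hb).integrable_sq
    simp only [← exp_nat_mul] at hsq ⊢
    exact integral_exp_pos hsq
  have hlower : (∫ z, K z ∂μ) / 2 * ∫ x, exp (-b * ‖x‖) ^ 2 ∂μ ≤
      ∫ x, ∫ y, exp (-b * ‖x‖) * exp (-b * ‖y‖) * K (x - y) ∂μ ∂μ := by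
    have happrox := (abs_le.1 (abs_integral_integral_exp_neg_mul_norm_sub_le μ hK hKR hb)).1
    have herror := mul_le_mul_of_nonneg_right hbR hsq_pos.le
    linarith
  exact ⟨hlower, (mul_pos (half_pos hKpos) hsq_pos).trans_le hlower⟩

end ExpNegNorm

/-- The double integral `∫∫ f(x) f(y) 𝒞(x−y) dx dy` is bounded below by
`(𝒞̄/2) ∫ f(x)² dx`, and in particular is strictly positive. -/
theorem double_integral_positive
    (d : ℕ) (hd : 1 ≤ d) (R : ℝ) (hR : 0 < R)
    (𝒞 : (Fin d → ℝ) → ℝ) (h𝒞cont : Continuous 𝒞)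
    (h𝒞supp : Function.support 𝒞 ⊆ {x | ‖x‖ ≤ R})
    (h𝒞bar : 0 < ∫ x, 𝒞 x)
    (b : ℝ) (hb : 0 < b)
    (hb' : b ≤ (∫ x, 𝒞 x) / (2 * Real.exp 1 * R * ∫ x, |𝒞 x|))
    (f : (Fin d → ℝ) → ℝ) (hf : ∀ x, f x = Real.exp (-b * ‖x‖)) :
    (∫ z, 𝒞 z) / 2 * (∫ x, (f x) ^ 2) ≤ (∫ x, ∫ y, f x * f y * 𝒞 (x - y))
    ∧ 0 < ∫ x, ∫ y, f x * f y * 𝒞 (x - y) :=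
  double_integral_positive_general volume h𝒞supp h𝒞bar hb (exp_mul_sub_one_mul_le_half hb hR
    h𝒞bar ((le_abs_self _).trans abs_integral_le_integral_abs) hb') hf
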